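/- Assume C is an n×n matrix with all entries positive and g is an admissible weight function. Then for any x, y ∈ int(Σ), d_H(M_g(x), M_g(y)) ≤ 2·L⁺(g)·d_H(x, y). -/

import Mathlib

open Set Matrix

/-- An admissible weight function. -/
def IsAdmissible (g g' : ℝ → ℝ) : Prop :=
  (∀ x ∈ Set.Icc (0:ℝ) 1, HasDerivWithinAt g (g' x) (Set.Icc (0:ℝ) 1) x) ∧
  ContinuousOn g' (Set.Icc (0:ℝ) 1) ∧
  g 0 = 1 ∧
  (∀ x ∈ Set.Icc (0:ℝ) 1, 0 < g x) ∧
  (∀ x ∈ Set.Icc (0:ℝ) 1, 0 < g' x)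

/-- The set of values `g'(x)/g(x)` for `x ∈ [0,1]`; its maximum is `L⁺(g)`. -/
def ratioSet (g g' : ℝ → ℝ) : Set ℝ := (fun x => g' x / g x) '' Set.Icc (0:ℝ) 1

/-- The stochastic matrix `M_g(x)`. -/
noncomputable def Mg {n : ℕ} (C : Matrix (Fin n) (Fin n) ℝ) (g : ℝ → ℝ)
    (x : Fin n → ℝ) : Matrix (Fin n) (Fin n) ℝ :=
  Matrix.of fun i j => C i j * g (x j) / ∑ k, C i k * g (x k)

/-- Hilbert's projective metric on positive vectors. -/
noncomputable def dH {n : ℕ} (x y : Fin n → ℝ) : ℝ :=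
  ⨆ i, ⨆ j, Real.log ((x i * y j) / (y i * x j))

/-- The induced projective metric between two positive matrices:
`d_H(A,B) = sup_{z > 0} d_H(zA, zB)`. -/
noncomputable def dHM {n : ℕ} (A B : Matrix (Fin n) (Fin n) ℝ) : ℝ :=
  ⨆ z : {z : Fin n → ℝ // ∀ i, 0 < z i},
    dH (Matrix.vecMul z.1 A) (Matrix.vecMul z.1 B)

/-!
With `u = g ∘ x`, the vector `z M_g(x)` is the entrywise product of `(z / C u) C` with `u`.
Nonnegative matrices do not increase Hilbert's metric, so each of the two factors moves by at most
`d_H(g ∘ x, g ∘ y)`. If `log g` is `K`-Lipschitz, this distance is at most `K ‖x - y‖₁`, and on the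
simplex `‖x - y‖₁ ≤ d_H(x, y) / 2`, because a probability is a `1/4`-Lipschitz function of its
log-odds. The resulting constant is `K`, half of `2 L⁺(g)` for an admissible `g`.
-/

open scoped NNReal

section OrderedSemiring

variable {ι κ R : Type*} [Fintype ι] [Semiring R] [PartialOrder R]

lemma mulVec_pos [IsStrictOrderedRing R] {A : Matrix κ ι R} {x : ι → R} (hA : ∀ i j, 0 ≤ A i j)
    (hrow : ∀ i, ∃ j, 0 < A i j) (hx : ∀ j, 0 < x j) (i : κ) : 0 < (A *ᵥ x) i := by
  obtain ⟨j, hj⟩ := hrow i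
  exact Finset.sum_pos' (fun k _ => mul_nonneg (hA i k) (hx k).le)
    ⟨j, Finset.mem_univ j, mul_pos hj (hx j)⟩

lemma dotProduct_mem_Icc_of_mem_stdSimplex [IsOrderedRing R] {c x : ι → R}
    (hx : x ∈ stdSimplex R ι) (hc : ∀ i, c i ∈ Icc (0 : R) 1) : c ⬝ᵥ x ∈ Icc (0 : R) 1 := by
  refine ⟨Finset.sum_nonneg fun i _ => mul_nonneg (hc i).1 (hx.1 i), ?_⟩
  rw [← hx.2]
  exact Finset.sum_le_sum fun i _ => mul_le_of_le_one_left (hx.1 i) (hc i).2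

end OrderedSemiring

section HilbertMetric

variable {m n : ℕ} {x y u v z : Fin n → ℝ}

lemma log_le_dH (x y : Fin n → ℝ) (i j : Fin n) :
    Real.log ((x i * y j) / (y i * x j)) ≤ dH x y :=
  (le_ciSup (f := fun j => Real.log ((x i * y j) / (y i * x j)))
    (Set.finite_range _).bddAbove j).trans
    (le_ciSup (f := fun i => ⨆ j, Real.log ((x i * y j) / (y i * x j)))
      (Set.finite_range _).bddAbove i)

lemma dH_nonneg (x y : Fin n → ℝ) : 0 ≤ dH x y := by
  rcases isEmpty_or_nonempty (Fin n) with _ | ⟨⟨i⟩⟩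
  · exact (Real.iSup_of_isEmpty _).ge
  · simpa only [mul_comm (y i), Real.log_div_self] using log_le_dH x y i i

lemma dH_le {r : ℝ} (hr : 0 ≤ r) (h : ∀ i j, Real.log ((x i * y j) / (y i * x j)) ≤ r) :
    dH x y ≤ r :=
  Real.iSup_le (fun i => Real.iSup_le (h i) hr) hr

lemma dH_comm (x y : Fin n → ℝ) : dH x y = dH y x := by
  have dH_le_swap (x y : Fin n → ℝ) : dH x y ≤ dH y x := by
    refine dH_le (dH_nonneg y x) fun i j => ?_
    simpa only [mul_comm] using log_le_dH y x j i
  exact (dH_le_swap x y).antisymm (dH_le_swap y x)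

lemma dH_le_iff (hx : ∀ i, 0 < x i) (hy : ∀ i, 0 < y i) {r : ℝ} (hr : 0 ≤ r) :
    dH x y ≤ r ↔ ∀ i j, x i * y j ≤ Real.exp r * (y i * x j) := by
  have log_le_iff (i j : Fin n) : Real.log ((x i * y j) / (y i * x j)) ≤ r ↔
      x i * y j ≤ Real.exp r * (y i * x j) := by
    have hxy := mul_pos (hx i) (hy j)
    have hyx := mul_pos (hy i) (hx j)
    rw [Real.log_le_iff_le_exp (div_pos hxy hyx), div_le_iff₀ hyx]
  simp only [← log_le_iff]
  exact ⟨fun h i j => (log_le_dH x y i j).trans h, dH_le hr⟩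

lemma dH_mul_le (hu : ∀ i, 0 < u i) (hv : ∀ i, 0 < v i) (hx : ∀ i, 0 < x i)
    (hy : ∀ i, 0 < y i) : dH (u * x) (v * y) ≤ dH u v + dH x y := by
  refine dH_le (add_nonneg (dH_nonneg u v) (dH_nonneg x y)) fun i j => ?_
  have huv : (u i * v j) / (v i * u j) ≠ 0 :=
    (div_pos (mul_pos (hu i) (hv j)) (mul_pos (hv i) (hu j))).ne'
  have hxy : (x i * y j) / (y i * x j) ≠ 0 :=
    (div_pos (mul_pos (hx i) (hy j)) (mul_pos (hy i) (hx j))).ne'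
  calc Real.log ((u * x) i * (v * y) j / ((v * y) i * (u * x) j))
      = Real.log ((u i * v j) / (v i * u j) * ((x i * y j) / (y i * x j))) := by
        simp only [Pi.mul_apply, div_mul_div_comm, mul_mul_mul_comm]
    _ = Real.log ((u i * v j) / (v i * u j)) + Real.log ((x i * y j) / (y i * x j)) :=
        Real.log_mul huv hxy
    _ ≤ dH u v + dH x y := add_le_add (log_le_dH u v i j) (log_le_dH x y i j)

lemma dH_div_left (hz : ∀ i, z i ≠ 0) (x y : Fin n → ℝ) : dH (z / x) (z / y) = dH x y := by
  rw [dH_comm x y]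
  refine iSup_congr fun i => iSup_congr fun j => congrArg Real.log ?_
  simp only [Pi.div_apply]
  have := hz i
  have := hz j
  field_simp

lemma dotProduct_mul_dotProduct_le_exp_dH_mul (hx : ∀ i, 0 < x i) (hy : ∀ i, 0 < y i)
    (hu : ∀ i, 0 ≤ u i) (hv : ∀ i, 0 ≤ v i) :
    (u ⬝ᵥ x) * (v ⬝ᵥ y) ≤ Real.exp (dH x y) * ((u ⬝ᵥ y) * (v ⬝ᵥ x)) := by
  simp only [dotProduct, Fintype.sum_mul_sum]
  simp only [Finset.mul_sum]
  refine Finset.sum_le_sum fun i _ => Finset.sum_le_sum fun j _ => ?_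
  have hij := (dH_le_iff hx hy (dH_nonneg x y)).1 le_rfl i j
  calc u i * x i * (v j * y j)
      = u i * v j * (x i * y j) := by ring
    _ ≤ u i * v j * (Real.exp (dH x y) * (y i * x j)) :=
        mul_le_mul_of_nonneg_left hij (mul_nonneg (hu i) (hv j))
    _ = Real.exp (dH x y) * (u i * y i * (v j * x j)) := by ring

lemma dH_mulVec_le {A : Matrix (Fin m) (Fin n) ℝ} (hA : ∀ i j, 0 ≤ A i j)
    (hrow : ∀ i, ∃ j, 0 < A i j) (hx : ∀ j, 0 < x j) (hy : ∀ j, 0 < y j) :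
    dH (A *ᵥ x) (A *ᵥ y) ≤ dH x y :=
  (dH_le_iff (mulVec_pos hA hrow hx) (mulVec_pos hA hrow hy) (dH_nonneg x y)).2 fun i j =>
    dotProduct_mul_dotProduct_le_exp_dH_mul hx hy (hA i) (hA j)

end HilbertMetric

section Simplex

variable {n : ℕ} {x y c : Fin n → ℝ}

lemma sigmoid_add_sub_sigmoid_le_div_four (t : ℝ) {d : ℝ} (hd : 0 ≤ d) :
    Real.sigmoid (t + d) - Real.sigmoid t ≤ d / 4 := by
  have hderiv (s : ℝ) : deriv Real.sigmoid s ≤ 1 / 4 := by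
    rw [Real.deriv_sigmoid]
    nlinarith only [sq_nonneg (2 * Real.sigmoid s - 1)]
  have := image_sub_le_mul_sub_of_deriv_le differentiable_sigmoid hderiv
    (le_add_of_nonneg_right hd : t ≤ t + d)
  linarith

-- In the logit coordinate `a = sigmoid α`, the hypothesis on the odds reads `α ≤ β + d`.
lemma sub_le_div_four_of_odds_le {a b d : ℝ} (ha : a ∈ Icc (0 : ℝ) 1) (hb : b ∈ Icc (0 : ℝ) 1)
    (hd : 0 ≤ d) (h : a * (1 - b) ≤ Real.exp d * (b * (1 - a))) : a - b ≤ d / 4 := by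
  rcases le_or_gt a b with hab | hab
  · linarith
  have ha0 : 0 < a := hb.1.trans_lt hab
  have hb1 : b < 1 := hab.trans_le ha.2
  have hba : 0 < b * (1 - a) :=
    pos_of_mul_pos_right ((mul_pos ha0 (sub_pos.2 hb1)).trans_le h) (Real.exp_pos d).le
  have ha1 : a < 1 := sub_pos.1 (pos_of_mul_pos_right hba hb.1)
  have hb0 : 0 < b := pos_of_mul_pos_left hba (sub_nonneg.2 ha.2)
  obtain ⟨α, rfl⟩ : a ∈ range Real.sigmoid := Real.range_sigmoid ▸ ⟨ha0, ha1⟩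
  obtain ⟨β, rfl⟩ : b ∈ range Real.sigmoid := Real.range_sigmoid ▸ ⟨hb0, hb1⟩
  have hαβ : α ≤ β + d := by
    simp only [← Real.sigmoid_neg, ← Real.sigmoid_mul_rexp_neg] at h
    have hexp : Real.exp (-β) ≤ Real.exp (d + -α) := by
      rw [Real.exp_add]
      refine le_of_mul_le_mul_left ?_ (mul_pos ha0 hb0)
      linarith
    linarith [Real.exp_le_exp.1 hexp]
  have := Real.sigmoid_le hαβ
  have := sigmoid_add_sub_sigmoid_le_div_four β hd
  linarith

lemma dotProduct_sub_dotProduct_le_dH_div_four (hx : x ∈ stdSimplex ℝ (Fin n))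
    (hy : y ∈ stdSimplex ℝ (Fin n)) (hx0 : ∀ i, 0 < x i) (hy0 : ∀ i, 0 < y i)
    (hc : ∀ i, c i ∈ Icc (0 : ℝ) 1) : c ⬝ᵥ x - c ⬝ᵥ y ≤ dH x y / 4 := by
  have one_sub_dotProduct {z : Fin n → ℝ} (hz : z ∈ stdSimplex ℝ (Fin n)) :
      (1 - c) ⬝ᵥ z = 1 - c ⬝ᵥ z := by
    rw [sub_dotProduct, one_dotProduct, hz.2]
  refine sub_le_div_four_of_odds_le (dotProduct_mem_Icc_of_mem_stdSimplex hx hc)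
    (dotProduct_mem_Icc_of_mem_stdSimplex hy hc) (dH_nonneg x y) ?_
  rw [← one_sub_dotProduct hx, ← one_sub_dotProduct hy]
  exact dotProduct_mul_dotProduct_le_exp_dH_mul hx0 hy0 (fun i => (hc i).1)
    fun i => sub_nonneg.2 (hc i).2

lemma sum_abs_sub_le_dH_div_two (hx : x ∈ stdSimplex ℝ (Fin n)) (hy : y ∈ stdSimplex ℝ (Fin n))
    (hx0 : ∀ i, 0 < x i) (hy0 : ∀ i, 0 < y i) : ∑ i, |x i - y i| ≤ dH x y / 2 := by
  let c : Fin n → ℝ := fun i => if y i ≤ x i then 1 else 0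
  have hc (i : Fin n) : c i ∈ Icc (0 : ℝ) 1 := by
    simp only [c]
    split_ifs <;> simp
  have habs (i : Fin n) : |x i - y i| = 2 * (c i * x i - c i * y i) - (x i - y i) := by
    simp only [c]
    split_ifs with h
    · rw [abs_of_nonneg (sub_nonneg.2 h)]
      ring
    · rw [abs_of_neg (sub_neg.2 (not_le.1 h))]
      ring
  calc ∑ i, |x i - y i|
      = 2 * (c ⬝ᵥ x - c ⬝ᵥ y) - (∑ i, x i - ∑ i, y i) := by
        simp only [habs, dotProduct, Finset.sum_sub_distrib, ← Finset.mul_sum]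
    _ = 2 * (c ⬝ᵥ x - c ⬝ᵥ y) := by rw [hx.2, hy.2, sub_self, sub_zero]
    _ ≤ dH x y / 2 := by linarith [dotProduct_sub_dotProduct_le_dH_div_four hx hy hx0 hy0 hc]

end Simplex

section Weight

variable {n : ℕ} {g : ℝ → ℝ} {x y : Fin n → ℝ}

lemma dH_comp_le {s : Set ℝ} {K : ℝ≥0} (hg : LipschitzOnWith K (fun t => Real.log (g t)) s)
    (hg0 : ∀ t ∈ s, 0 < g t) (hx : ∀ i, x i ∈ s) (hy : ∀ i, y i ∈ s) :
    dH (g ∘ x) (g ∘ y) ≤ K * ∑ i, |x i - y i| := by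
  have hsum : 0 ≤ ∑ i, |x i - y i| := Finset.sum_nonneg fun i _ => abs_nonneg _
  refine dH_le (mul_nonneg K.2 hsum) fun i j => ?_
  simp only [Function.comp_apply]
  rcases eq_or_ne i j with rfl | hij
  · rw [mul_comm (g (y i)), Real.log_div_self]
    exact mul_nonneg K.2 hsum
  have hlog (k : Fin n) : |Real.log (g (x k)) - Real.log (g (y k))| ≤ K * |x k - y k| :=
    hg.dist_le_mul _ (hx k) _ (hy k)
  have hpair : |x i - y i| + |x j - y j| ≤ ∑ k, |x k - y k| := by
    rw [← Finset.sum_pair (f := fun k => |x k - y k|) hij]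
    exact Finset.sum_le_univ_sum_of_nonneg fun k => abs_nonneg _
  have hgx (k : Fin n) : g (x k) ≠ 0 := (hg0 _ (hx k)).ne'
  have hgy (k : Fin n) : g (y k) ≠ 0 := (hg0 _ (hy k)).ne'
  calc Real.log (g (x i) * g (y j) / (g (y i) * g (x j)))
      = (Real.log (g (x i)) - Real.log (g (y i))) -
          (Real.log (g (x j)) - Real.log (g (y j))) := by
        rw [Real.log_div (mul_ne_zero (hgx i) (hgy j)) (mul_ne_zero (hgy i) (hgx j)),
          Real.log_mul (hgx i) (hgy j), Real.log_mul (hgy i) (hgx j)]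
        ring
    _ ≤ K * |x i - y i| + K * |x j - y j| := by
        linarith [(abs_le.1 (hlog i)).2, (abs_le.1 (hlog j)).1]
    _ ≤ K * ∑ k, |x k - y k| := by
        rw [← mul_add]
        exact mul_le_mul_of_nonneg_left hpair K.2

lemma vecMul_Mg (C : Matrix (Fin n) (Fin n) ℝ) (g : ℝ → ℝ) (x z : Fin n → ℝ) :
    z ᵥ* Mg C g x = ((z / (C *ᵥ (g ∘ x))) ᵥ* C) * (g ∘ x) := by
  ext j
  simp only [vecMul, mulVec, dotProduct, Mg, of_apply, Pi.mul_apply, Pi.div_apply,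
    Function.comp_apply, Finset.sum_mul]
  exact Finset.sum_congr rfl fun i _ => by ring

lemma dHM_Mg_le {C : Matrix (Fin n) (Fin n) ℝ} (hC : ∀ i j, 0 ≤ C i j)
    (hrow : ∀ i, ∃ j, 0 < C i j) (hcol : ∀ j, ∃ i, 0 < C i j)
    (hgx : ∀ i, 0 < g (x i)) (hgy : ∀ i, 0 < g (y i)) :
    dHM (Mg C g x) (Mg C g y) ≤ 2 * dH (g ∘ x) (g ∘ y) := by
  refine Real.iSup_le (fun ⟨z, hz⟩ => ?_) (mul_nonneg zero_le_two (dH_nonneg _ _))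
  let weights (u : Fin n → ℝ) : Fin n → ℝ := z / (C *ᵥ (g ∘ u))
  have weights_pos {u : Fin n → ℝ} (hgu : ∀ i, 0 < g (u i)) (i : Fin n) :
      0 < weights u i := div_pos (hz i) (mulVec_pos hC hrow hgu i)
  have hCT : ∀ i j, 0 ≤ Cᵀ i j := fun i j => hC j i
  rw [vecMul_Mg, vecMul_Mg, ← mulVec_transpose, ← mulVec_transpose]
  calc dH ((Cᵀ *ᵥ weights x) * (g ∘ x)) ((Cᵀ *ᵥ weights y) * (g ∘ y))
      ≤ dH (Cᵀ *ᵥ weights x) (Cᵀ *ᵥ weights y) + dH (g ∘ x) (g ∘ y) :=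
        dH_mul_le (mulVec_pos hCT hcol (weights_pos hgx))
          (mulVec_pos hCT hcol (weights_pos hgy)) hgx hgy
    _ ≤ dH (weights x) (weights y) + dH (g ∘ x) (g ∘ y) :=
        add_le_add_left (dH_mulVec_le hCT hcol (weights_pos hgx) (weights_pos hgy)) _
    _ = dH (C *ᵥ (g ∘ x)) (C *ᵥ (g ∘ y)) + dH (g ∘ x) (g ∘ y) := by
        rw [dH_div_left fun i => (hz i).ne']
    _ ≤ 2 * dH (g ∘ x) (g ∘ y) := by
        rw [two_mul]
        exact add_le_add_left (dH_mulVec_le hC hrow hgx hgy) _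

end Weight

lemma lipschitzOnWith_log_of_abs_div_le {f f' : ℝ → ℝ} {s : Set ℝ} (hs : Convex ℝ s)
    (hf : ∀ t ∈ s, HasDerivWithinAt f (f' t) s t) (hf0 : ∀ t ∈ s, f t ≠ 0) {K : ℝ≥0}
    (hK : ∀ t ∈ s, |f' t / f t| ≤ K) : LipschitzOnWith K (fun t => Real.log (f t)) s :=
  hs.lipschitzOnWith_of_nnnorm_hasDerivWithin_le (fun t ht => (hf t ht).log (hf0 t ht)) hK

lemma IsAdmissible.nonneg_of_mem_ratioSet {g g' : ℝ → ℝ} (hg : IsAdmissible g g') {r : ℝ}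
    (hr : r ∈ ratioSet g g') : 0 ≤ r := by
  obtain ⟨-, -, -, hpos, hpos'⟩ := hg
  obtain ⟨t, ht, rfl⟩ := hr
  exact (div_pos (hpos' t ht) (hpos t ht)).le

lemma IsAdmissible.lipschitzOnWith_log {g g' : ℝ → ℝ} (hg : IsAdmissible g g') {K : ℝ≥0}
    (hK : (K : ℝ) ∈ upperBounds (ratioSet g g')) :
    LipschitzOnWith K (fun t => Real.log (g t)) (Icc 0 1) := by
  refine lipschitzOnWith_log_of_abs_div_le (convex_Icc 0 1) hg.1
    (fun t ht => (hg.2.2.2.1 t ht).ne') fun t ht => ?_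
  have ht' : g' t / g t ∈ ratioSet g g' := mem_image_of_mem _ ht
  exact (abs_of_nonneg (hg.nonneg_of_mem_ratioSet ht')).trans_le (hK ht')

theorem projective_metric_contraction_general {n : ℕ} {C : Matrix (Fin n) (Fin n) ℝ}
    (hC : ∀ i j, 0 ≤ C i j) (hrow : ∀ i, ∃ j, 0 < C i j) (hcol : ∀ j, ∃ i, 0 < C i j)
    {g : ℝ → ℝ} (hg0 : ∀ t ∈ Icc (0 : ℝ) 1, 0 < g t) {K : ℝ≥0}
    (hg : LipschitzOnWith K (fun t => Real.log (g t)) (Icc 0 1)) {x y : Fin n → ℝ}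
    (hx : x ∈ stdSimplex ℝ (Fin n)) (hy : y ∈ stdSimplex ℝ (Fin n))
    (hx0 : ∀ i, 0 < x i) (hy0 : ∀ i, 0 < y i) :
    dHM (Mg C g x) (Mg C g y) ≤ K * dH x y := by
  have hxI (i : Fin n) : x i ∈ Icc (0 : ℝ) 1 := mem_Icc_of_mem_stdSimplex hx i
  have hyI (i : Fin n) : y i ∈ Icc (0 : ℝ) 1 := mem_Icc_of_mem_stdSimplex hy i
  calc dHM (Mg C g x) (Mg C g y)
      ≤ 2 * dH (g ∘ x) (g ∘ y) :=
        dHM_Mg_le hC hrow hcol (fun i => hg0 _ (hxI i)) fun i => hg0 _ (hyI i)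
    _ ≤ 2 * (K * ∑ i, |x i - y i|) :=
        mul_le_mul_of_nonneg_left (dH_comp_le hg hg0 hxI hyI) zero_le_two
    _ ≤ 2 * (K * (dH x y / 2)) := by gcongr; exact sum_abs_sub_le_dH_div_two hx hy hx0 hy0
    _ = K * dH x y := by ring

theorem projective_metric_contraction
    (n : ℕ) (hn : 0 < n) (C : Matrix (Fin n) (Fin n) ℝ)
    (hCpos : ∀ i j, 0 < C i j)
    (g g' : ℝ → ℝ) (hg : IsAdmissible g g')
    (Lp : ℝ) (hLp : IsGreatest (ratioSet g g') Lp) :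
    ∀ x ∈ stdSimplex ℝ (Fin n), ∀ y ∈ stdSimplex ℝ (Fin n),
      (∀ i, 0 < x i) → (∀ i, 0 < y i) →
      dHM (Mg C g x) (Mg C g y) ≤ 2 * Lp * dH x y := by
  intro x hx y hy hx0 hy0
  lift Lp to ℝ≥0 using hg.nonneg_of_mem_ratioSet hLp.1
  calc dHM (Mg C g x) (Mg C g y)
      ≤ Lp * dH x y :=
        projective_metric_contraction_general (fun i j => (hCpos i j).le)
          (fun i => ⟨i, hCpos i i⟩) (fun j => ⟨j, hCpos j j⟩) hg.2.2.2.1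
          (hg.lipschitzOnWith_log hLp.2) hx hy hx0 hy0
    _ ≤ 2 * Lp * dH x y :=
        mul_le_mul_of_nonneg_right (le_mul_of_one_le_left Lp.2 one_le_two) (dH_nonneg x y)
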